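/- Let Var_n^sep denote variance with respect to the uniform probability measure on SEP(n). Then lim_{n→∞} Var_n^sep(A_n^{+,−})/n = (16 − 11√2)/2, and the same limit holds for Var_n^sep(A_n^{−,+}). -/

import Mathlib

open Finset Filter Real
open scoped Classical

/-- `σ` contains the pattern `τ` (a permutation of `Fin k` given as a function). -/
def ContainsPattern {n k : ℕ} (σ : Equiv.Perm (Fin n)) (τ : Fin k → Fin k) : Prop :=
  ∃ f : Fin k → Fin n, StrictMono f ∧ ∀ a b : Fin k, τ a < τ b ↔ σ (f a) < σ (f b)

/-- A permutation is separable iff it avoids the patterns 2413 and 3142. -/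
def Separable {n : ℕ} (σ : Equiv.Perm (Fin n)) : Prop :=
  ¬ ContainsPattern σ (![1, 3, 0, 2] : Fin 4 → Fin 4) ∧
  ¬ ContainsPattern σ (![2, 0, 3, 1] : Fin 4 → Fin 4)

/-- The set of separable permutations of `[n]`. -/
noncomputable def SEP (n : ℕ) : Finset (Equiv.Perm (Fin n)) :=
  Finset.univ.filter fun σ => Separable σ

/-- `IsAltSeq σ s l` : `l` is a strictly increasing list of indices along which the values of `σ`
alternate, starting with an ascent if `s = true` and starting with a descent if `s = false`. -/
def IsAltSeq {n : ℕ} (σ : Equiv.Perm (Fin n)) (s : Bool) (l : List (Fin n)) : Prop :=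
  l.Chain' (· < ·) ∧
  ∀ j : ℕ, ∀ hj : j + 1 < l.length,
    if decide (j % 2 = 0) = s then
      σ (l.get ⟨j, Nat.lt_of_succ_lt hj⟩) < σ (l.get ⟨j + 1, hj⟩)
    else
      σ (l.get ⟨j + 1, hj⟩) < σ (l.get ⟨j, Nat.lt_of_succ_lt hj⟩)

/-- The length of the longest alternating subsequence of `σ` of type `(s, e)`, where
`true` stands for ascent and `false` for descent.  An alternating subsequence starting with
an ascent ends with a descent iff its length is odd (and similarly in the other cases), so the
type is encoded by the parity constraint; a singleton counts as a subsequence of types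
`(+,-)` and `(-,+)` but not of types `(+,+)` and `(-,-)`. -/
noncomputable def altTypeLen {n : ℕ} (σ : Equiv.Perm (Fin n)) (s e : Bool) : ℕ :=
  sSup {k | ∃ l : List (Fin n), IsAltSeq σ s l ∧ l.length = k ∧
    k % 2 = (if s = e then 0 else 1)}

/-- The length `Aₙ(σ)` of the longest alternating subsequence of `σ`. -/
noncomputable def altLen {n : ℕ} (σ : Equiv.Perm (Fin n)) : ℕ :=
  sSup {k | ∃ l : List (Fin n), (IsAltSeq σ true l ∨ IsAltSeq σ false l) ∧
    l.length = k ∧ 1 ≤ k}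

/-- Expectation with respect to the uniform probability measure on `SEP n`. -/
noncomputable def sepExp (n : ℕ) (f : Equiv.Perm (Fin n) → ℝ) : ℝ :=
  (∑ σ ∈ SEP n, f σ) / (SEP n).card

/-- Variance with respect to the uniform probability measure on `SEP n`. -/
noncomputable def sepVar (n : ℕ) (f : Equiv.Perm (Fin n) → ℝ) : ℝ :=
  sepExp n (fun σ => (f σ - sepExp n f) ^ 2)

/-- `B₁^{+,n}(σ)`: the length of the first indecomposable block (0-indexed positions). -/
noncomputable def Bplus {n : ℕ} (σ : Equiv.Perm (Fin n)) : ℕ :=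
  sInf {j | 1 ≤ j ∧ ∀ i : Fin n, (i : ℕ) < j → (σ i : ℕ) < j}

/-- `B₁^{-,n}(σ)`: the length of the first skew indecomposable block (0-indexed positions). -/
noncomputable def Bminus {n : ℕ} (σ : Equiv.Perm (Fin n)) : ℕ :=
  sInf {j | 1 ≤ j ∧ ∀ i : Fin n, (i : ℕ) < j → n - j ≤ (σ i : ℕ)}

/-- Expectation over indecomposable separable permutations of `[n]`, i.e. the conditional
expectation under the uniform measure on `SEP n` given `{B₁^{+,n} = n}`. -/
noncomputable def indecExp (n : ℕ) (f : Equiv.Perm (Fin n) → ℝ) : ℝ :=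
  (∑ σ ∈ (SEP n).filter (fun σ => Bplus σ = n), f σ) /
    ((SEP n).filter (fun σ => Bplus σ = n)).card

/-!
Taking greedily the next turning point shows that the longest alternating subsequence of type
`(+,-)` of `σ` has length `2 p + 1`, where `p` is the number of interior local maxima (peaks) of
`σ`. Complementing the values exchanges the types `(+,-)` and `(-,+)` and preserves separability,
so only the variance of `p` over separable permutations matters.

A separable permutation with at least two entries is either a direct sum or the reversal of one.
The peaks of `σ ⊕ τ` are the peaks of `σ` plus the descent runs of `τ`; descent runs are additive
under `⊕`, and reversal preserves peaks while it turns descent runs into ascent runs. Hence the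
generating function `P(x, t)` of the separable permutations by size and number of peaks satisfies
`P = x (1 + 2 P + t P ^ 2) + t P ^ 3`. Expanding it at `t = 1 + s` expresses the first two binomial
moments rationally in terms of `U = P(x, 1)`, where `U (1 - U) = x (1 + U)`, and reduction on this
curve makes them linear combinations of `U` and its derivatives with polynomial coefficients.

The variance of `p` thus becomes an explicit function of `n` and of the ratios `q` of consecutive
numbers of separable permutations. The three-term recurrence of these numbers gives `q → ρ` and
`n (q - ρ) → 3 ρ / 2` with `ρ = 3 - 2 √2`, the terms of order `n ^ 2` cancel, and the variance of
`p` is asymptotic to `(11 ρ - 1) / 16 * n`.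
-/

section StepWords

variable {α β : Type*} [LinearOrder α] [LinearOrder β]

/-- The word of ascents (`true`) and descents (`false`) between consecutive entries of a list. -/
def stepWord : List α → List Bool
  | x :: y :: l => decide (x < y) :: stepWord (y :: l)
  | _ => []

@[simp] lemma stepWord_nil : stepWord ([] : List α) = [] := by rw [stepWord]; simp

@[simp] lemma stepWord_singleton (x : α) : stepWord [x] = [] := by rw [stepWord]; simp

@[simp] lemma stepWord_cons_cons (x y : α) (l : List α) :
    stepWord (x :: y :: l) = decide (x < y) :: stepWord (y :: l) := by rw [stepWord]

lemma stepWord_map_of_strictMono {f : α → β} (hf : StrictMono f) :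
    ∀ l : List α, stepWord (l.map f) = stepWord l
  | [] | [_] => by simp
  | x :: y :: l => by
    have ih := stepWord_map_of_strictMono hf (y :: l)
    simp_all [hf.lt_iff_lt]

lemma stepWord_map_of_strictAnti {f : α → β} (hf : StrictAnti f) :
    ∀ {l : List α}, l.IsChain (· ≠ ·) → stepWord (l.map f) = (stepWord l).map not
  | [], _ | [_], _ => by simp
  | x :: y :: l, h => by
    obtain ⟨hxy, h⟩ := List.isChain_cons_cons.mp h
    have ih := stepWord_map_of_strictAnti hf h
    have hstep : decide (y < x) = !decide (x < y) := by
      rcases hxy.lt_or_gt with hlt | hlt <;> simp [hlt, hlt.le]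
    simp_all [hf.lt_iff_gt]

lemma stepWord_append_cons (x : α) (l' : List α) :
    ∀ l : List α, stepWord (l ++ x :: l') = stepWord (l ++ [x]) ++ stepWord (x :: l')
  | [] => by simp
  | [_] => by simp
  | y :: z :: l => by
    have ih := stepWord_append_cons x l' (z :: l)
    simp_all

lemma stepWord_append {l l' : List α} (hl : l ≠ []) (hl' : l' ≠ [])
    (h : ∀ x ∈ l, ∀ y ∈ l', x < y) :
    stepWord (l ++ l') = stepWord l ++ true :: stepWord l' := by
  obtain ⟨l, x, rfl⟩ := List.eq_nil_or_concat' l |>.resolve_left hl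
  obtain ⟨y, l', rfl⟩ := List.exists_cons_of_ne_nil hl'
  rw [List.append_assoc, List.singleton_append, stepWord_append_cons, stepWord_cons_cons,
    decide_eq_true (h x (by simp) y (by simp))]

lemma stepWord_reverse :
    ∀ {l : List α}, l.IsChain (· ≠ ·) → stepWord l.reverse = ((stepWord l).map not).reverse
  | [], _ | [_], _ => by simp
  | x :: y :: l, h => by
    obtain ⟨hxy, h⟩ := List.isChain_cons_cons.mp h
    have hstep : decide (y < x) = !decide (x < y) := by
      rcases hxy.lt_or_gt with hlt | hlt <;> simp [hlt, hlt.le]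
    have ih := stepWord_reverse h
    rw [List.reverse_cons] at ih
    simp [stepWord_append_cons, ih, hstep]

end StepWords

/-- The number of ascents of a step word that are immediately followed by a descent, that is, of
interior local maxima of a list with that step word. -/
def peakCount : List Bool → ℕ
  | true :: false :: w => peakCount w + 1
  | _ :: w => peakCount w
  | [] => 0

@[simp] lemma peakCount_nil : peakCount [] = 0 := by rw [peakCount]
@[simp] lemma peakCount_singleton (b : Bool) : peakCount [b] = 0 := by simp [peakCount]
@[simp] lemma peakCount_false_cons (w : List Bool) : peakCount (false :: w) = peakCount w := by
  simp [peakCount]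
@[simp] lemma peakCount_true_true_cons (w : List Bool) :
    peakCount (true :: true :: w) = peakCount (true :: w) := by
  simp [peakCount]
@[simp] lemma peakCount_true_false_cons (w : List Bool) :
    peakCount (true :: false :: w) = peakCount w + 1 := by simp [peakCount]

lemma peakCount_append_true_cons (w' : List Bool) :
    ∀ w, peakCount (w ++ true :: w') = peakCount w + peakCount (true :: w')
  | [] | [false] | [true] => by simp
  | false :: b :: w => by simpa using peakCount_append_true_cons w' (b :: w)
  | true :: true :: w => by simpa using peakCount_append_true_cons w' (true :: w)
  | true :: false :: w => by
    have := peakCount_append_true_cons w' w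
    simp only [List.cons_append, peakCount_true_false_cons]
    omega

lemma peakCount_append_false_cons (w' : List Bool) :
    ∀ w, peakCount (w ++ false :: w') = peakCount (w ++ [false]) + peakCount w'
  | [] | [false] | [true] => by simp [add_comm]
  | false :: b :: w => by simpa using peakCount_append_false_cons w' (b :: w)
  | true :: true :: w => by simpa using peakCount_append_false_cons w' (true :: w)
  | true :: false :: w => by
    have := peakCount_append_false_cons w' w
    simp only [List.cons_append, peakCount_true_false_cons]
    omega

lemma peakCount_reverse_map_not :
    ∀ w, peakCount (w.map not).reverse = peakCount w
  | [] | [_] => by simp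
  | false :: b :: w => by
    have := peakCount_reverse_map_not (b :: w)
    rw [List.map_cons, List.reverse_cons, Bool.not_false, peakCount_append_true_cons]
    simpa
  | true :: true :: w => by
    have := peakCount_reverse_map_not (true :: w)
    rw [List.map_cons, List.reverse_cons, Bool.not_true] at this
    rw [List.map_cons, List.map_cons, List.reverse_cons, List.reverse_cons, Bool.not_true,
      List.append_assoc, List.singleton_append, peakCount_append_false_cons, this]
    simp
  | true :: false :: w => by
    have := peakCount_reverse_map_not w
    simp_all [peakCount_append_true_cons]

lemma peakCount_true_cons_append_false :
    ∀ w, peakCount (true :: (w ++ [false])) = peakCount (w.map not) + 1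
  | [] | [false] | [true] => by simp
  | true :: b :: w => by simpa using peakCount_true_cons_append_false (b :: w)
  | false :: false :: w => by simpa using peakCount_true_cons_append_false (false :: w)
  | false :: true :: w => by simpa using peakCount_true_cons_append_false w

section Alternating

variable {α : Type*} [LinearOrder α]

/-- A strict step in the direction `s`: up for `true`, down for `false`. -/
def Step (s : Bool) (x y : α) : Prop := if s then x < y else y < x

/-- The entries of a list alternately go up and down, the first step having direction `s`. -/
def Alternates : Bool → List α → Prop
  | s, x :: y :: l => Step s x y ∧ Alternates (!s) (y :: l)
  | _, _ => True

/-- The number of steps of the greedy alternating subsequence of a step word whose first step has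
direction `s`: the direction is switched every time the requested step occurs. -/
def altSteps : Bool → List Bool → ℕ
  | _, [] => 0
  | s, b :: w => if b = s then altSteps (!s) w + 1 else altSteps s w

@[simp] lemma alternates_nil (s : Bool) : Alternates s ([] : List α) := by simp [Alternates]

@[simp] lemma alternates_singleton (s : Bool) (x : α) : Alternates s [x] := by simp [Alternates]

@[simp] lemma alternates_cons_cons {s : Bool} {x y : α} {l : List α} :
    Alternates s (x :: y :: l) ↔ Step s x y ∧ Alternates (!s) (y :: l) := by rw [Alternates]

lemma Step.trans {s : Bool} {x y z : α} (h : Step s x y) (h' : Step s y z) : Step s x z := by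
  cases s
  · exact lt_trans h' h
  · exact lt_trans h h'

lemma step_iff_decide_lt_eq {s : Bool} {x y : α} (h : x ≠ y) :
    Step s x y ↔ decide (x < y) = s := by
  rcases h.lt_or_gt with h | h <;> cases s <;> simp [Step, h, h.le]

lemma Alternates.of_cons {s : Bool} {x : α} :
    ∀ {l : List α}, Alternates s (x :: l) → Alternates (!s) l
  | [], _ => alternates_nil _
  | _ :: _, h => (alternates_cons_cons.mp h).2

lemma Alternates.dropLast :
    ∀ {s : Bool} {l : List α}, Alternates s l → Alternates s l.dropLast
  | _, [], _ | _, [_], _ | _, [_, _], _ => by simp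
  | _, _ :: _ :: _ :: _, h => by
    rw [alternates_cons_cons] at h
    simpa using ⟨h.1, h.2.dropLast⟩

lemma exists_sublist_alternates :
    ∀ (s : Bool) (x : α) (l : List α), (x :: l).IsChain (· ≠ ·) → ∃ z m,
      (z :: m).Sublist (x :: l) ∧ Alternates s (z :: m) ∧
        m.length = altSteps s (stepWord (x :: l)) ∧ (x = z ∨ Step (!s) x z)
  | s, x, [], _ => ⟨x, [], by simp [altSteps]⟩
  | s, x, y :: l, h => by
    obtain ⟨hxy, h⟩ := List.isChain_cons_cons.mp h
    have hstep := step_iff_decide_lt_eq (s := s) hxy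
    by_cases hs : decide (x < y) = s
    · obtain ⟨z, m, hsub, halt, hlen, hyz⟩ := exists_sublist_alternates (!s) y l h
      have hxz : Step s x z := by
        rcases hyz with rfl | hyz
        · exact hstep.mpr hs
        · exact (hstep.mpr hs).trans (by simpa using hyz)
      exact ⟨x, z :: m, hsub.cons_cons x, by simp [hxz, halt], by simp [altSteps, hs, hlen],
        .inl rfl⟩
    · obtain ⟨z, m, hsub, halt, hlen, hyz⟩ := exists_sublist_alternates s y l h
      have hxy' : Step (!s) x y := (step_iff_decide_lt_eq hxy).mpr (by grind)
      refine ⟨z, m, hsub.cons x, halt, by simp [altSteps, hs, hlen], .inr ?_⟩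
      rcases hyz with rfl | hyz
      · exact hxy'
      · exact hxy'.trans hyz

lemma altSteps_le_altSteps_not_add_one (s : Bool) :
    ∀ w, altSteps s w ≤ altSteps (!s) w + 1
  | [] => by simp [altSteps]
  | b :: w => by
    have h := altSteps_le_altSteps_not_add_one s w
    have h' := altSteps_le_altSteps_not_add_one (!s) w
    rw [Bool.not_not] at h'
    rw [altSteps, altSteps]
    cases b <;> cases s <;>
      simp only [reduceCtorEq, if_true, if_false, Bool.not_true, Bool.not_false] at h h' ⊢ <;>
      omega

lemma altSteps_le_altSteps_cons (s b : Bool) (w : List Bool) :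
    altSteps s w ≤ altSteps s (b :: w) := by
  have h := altSteps_le_altSteps_not_add_one s w
  rw [altSteps]
  split <;> omega

lemma Alternates.length_le_altSteps :
    ∀ {s : Bool} {x : α} {l m : List α}, (x :: l).IsChain (· ≠ ·) → m.Sublist (x :: l) →
      Alternates s m → m.length ≤ altSteps s (stepWord (x :: l)) + 1
  | _, _, [], _, _, hm, _ => hm.length_le.trans (by simp)
  | s, x, y :: l, m, h, hm, halt => by
    obtain ⟨hxy, h⟩ := List.isChain_cons_cons.mp h
    rw [stepWord_cons_cons]
    obtain htail | ⟨m, rfl, htail⟩ := List.sublist_cons_iff.mp hm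
    · exact (halt.length_le_altSteps h htail).trans
        (Nat.succ_le_succ (altSteps_le_altSteps_cons ..))
    by_cases hs : decide (x < y) = s
    · simpa [altSteps, hs] using halt.of_cons.length_le_altSteps h htail
    -- The second entry `z` still works after replacing `x` by `y`, which lies on its far side.
    obtain _ | ⟨z, m⟩ := m
    · simp
    obtain ⟨hxz, halt⟩ := alternates_cons_cons.mp halt
    have hyx : Step s y x := (step_iff_decide_lt_eq hxy.symm).mpr (by
      rcases hxy.lt_or_gt with hlt | hlt <;> cases s <;> simp_all [hlt.le])
    have hzm : (z :: m).Sublist l := by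
      obtain hzm | ⟨_, hzm, _⟩ := List.sublist_cons_iff.mp htail
      · exact hzm
      · obtain rfl := (List.cons.inj hzm).1
        exact absurd ((step_iff_decide_lt_eq hxy).mp hxz) hs
    have hlen := length_le_altSteps h (hzm.cons_cons y)
      (alternates_cons_cons.mpr ⟨hyx.trans hxz, halt⟩)
    simpa [altSteps, hs] using hlen

lemma altSteps_div_two :
    ∀ w, altSteps true w / 2 = peakCount w ∧ (altSteps false w + 1) / 2 = peakCount (true :: w)
  | [] => by simp [altSteps]
  | true :: w => by
    have h := (altSteps_div_two w).2
    simpa [altSteps] using h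
  | false :: w => by
    have h := (altSteps_div_two w).1
    have h' : (altSteps true w + 1 + 1) / 2 = peakCount w + 1 := by omega
    simpa [altSteps, h] using h'

end Alternating

section PermutationStatistics

open Equiv

variable {m n : ℕ}

/-- The step word of a permutation, read along its one-line notation. -/
def permWord (σ : Perm (Fin n)) : List Bool := stepWord (List.ofFn σ)

/-- The number of interior local maxima of a permutation. -/
def peaks (σ : Perm (Fin n)) : ℕ := peakCount (permWord σ)

/-- The number of maximal runs of descents of a permutation: the local maxima that are followed by
a descent, a descent at the first position being counted. -/
def descRuns (σ : Perm (Fin n)) : ℕ := peakCount (true :: permWord σ)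

/-- The number of maximal runs of ascents of a permutation: the local maxima that are preceded by
an ascent, an ascent at the last position being counted. -/
def ascRuns (σ : Perm (Fin n)) : ℕ := peakCount (permWord σ ++ [false])

/-- The permutation whose one-line notation is that of `σ` read backwards. -/
def permRev (σ : Perm (Fin n)) : Perm (Fin n) := Fin.revPerm.trans σ

/-- The permutation obtained from `σ` by turning the values upside down. -/
def permCompl (σ : Perm (Fin n)) : Perm (Fin n) := σ.trans Fin.revPerm

/-- The direct sum `σ ⊕ τ`: `σ` on the first positions and values, a shifted copy of `τ` on the
last ones. -/
def directSum (σ : Perm (Fin m)) (τ : Perm (Fin n)) : Perm (Fin (m + n)) :=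
  finSumFinEquiv.permCongr (sumCongr σ τ)

@[simp] lemma permRev_apply (σ : Perm (Fin n)) (i : Fin n) : permRev σ i = σ i.rev := rfl

@[simp] lemma permCompl_apply (σ : Perm (Fin n)) (i : Fin n) : permCompl σ i = (σ i).rev := rfl

@[simp] lemma permRev_permRev (σ : Perm (Fin n)) : permRev (permRev σ) = σ := by ext; simp

@[simp] lemma permCompl_permCompl (σ : Perm (Fin n)) : permCompl (permCompl σ) = σ := by ext; simp

@[simp] lemma directSum_castAdd (σ : Perm (Fin m)) (τ : Perm (Fin n)) (i : Fin m) :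
    directSum σ τ (i.castAdd n) = (σ i).castAdd n := by
  simp [directSum, Equiv.permCongr_apply]

@[simp] lemma directSum_natAdd (σ : Perm (Fin m)) (τ : Perm (Fin n)) (i : Fin n) :
    directSum σ τ (i.natAdd m) = (τ i).natAdd m := by
  simp [directSum, Equiv.permCongr_apply]

lemma directSum_lt_iff (σ : Perm (Fin m)) (τ : Perm (Fin n)) (i : Fin (m + n)) :
    (directSum σ τ i : ℕ) < m ↔ (i : ℕ) < m := by
  induction i using Fin.addCases <;> simp

lemma isChain_ne_ofFn (σ : Perm (Fin n)) : (List.ofFn σ).IsChain (· ≠ ·) :=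
  (List.nodup_ofFn.mpr σ.injective).isChain

lemma ofFn_permRev (σ : Perm (Fin n)) : List.ofFn (permRev σ) = (List.ofFn σ).reverse := by
  apply List.ext_getElem <;> simp [Fin.rev, Nat.sub_add_eq, Nat.sub_right_comm]

lemma permWord_permRev (σ : Perm (Fin n)) :
    permWord (permRev σ) = ((permWord σ).map not).reverse := by
  rw [permWord, ofFn_permRev, stepWord_reverse (isChain_ne_ofFn σ), permWord]

lemma permWord_permCompl (σ : Perm (Fin n)) : permWord (permCompl σ) = (permWord σ).map not := by
  have h : List.ofFn (permCompl σ) = (List.ofFn σ).map Fin.rev := by rw [List.map_ofFn]; rfl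
  rw [permWord, h, stepWord_map_of_strictAnti Fin.rev_strictAnti (isChain_ne_ofFn σ), permWord]

lemma permWord_directSum (hm : 0 < m) (hn : 0 < n) (σ : Perm (Fin m)) (τ : Perm (Fin n)) :
    permWord (directSum σ τ) = permWord σ ++ true :: permWord τ := by
  have h : List.ofFn (directSum σ τ) =
      (List.ofFn σ).map (Fin.castAdd n) ++ (List.ofFn τ).map (Fin.natAdd m) := by
    rw [List.ofFn_add, List.map_ofFn, List.map_ofFn]
    congr 2 <;> ext1 i
    · exact directSum_castAdd σ τ i
    · exact directSum_natAdd σ τ i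
  rw [permWord, h, stepWord_append (by simpa using hm.ne') (by simpa using hn.ne'),
    stepWord_map_of_strictMono (Fin.strictMono_castAdd n),
    stepWord_map_of_strictMono (Fin.strictMono_natAdd m), permWord, permWord]
  simp only [List.mem_map, List.mem_ofFn]
  rintro _ ⟨i, -, rfl⟩ _ ⟨j, -, rfl⟩
  exact Fin.lt_def.mpr (by simp only [Fin.val_castAdd, Fin.val_natAdd]; omega)

lemma peaks_permRev (σ : Perm (Fin n)) : peaks (permRev σ) = peaks σ := by
  rw [peaks, permWord_permRev, peakCount_reverse_map_not, peaks]

lemma descRuns_permRev (σ : Perm (Fin n)) : descRuns (permRev σ) = ascRuns σ := by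
  rw [descRuns, permWord_permRev, ascRuns, ← peakCount_reverse_map_not (permWord σ ++ [false])]
  simp

lemma peaks_directSum (hm : 0 < m) (hn : 0 < n) (σ : Perm (Fin m)) (τ : Perm (Fin n)) :
    peaks (directSum σ τ) = peaks σ + descRuns τ := by
  rw [peaks, permWord_directSum hm hn, peakCount_append_true_cons, peaks, descRuns]

lemma descRuns_directSum (hm : 0 < m) (hn : 0 < n) (σ : Perm (Fin m)) (τ : Perm (Fin n)) :
    descRuns (directSum σ τ) = descRuns σ + descRuns τ := by
  rw [descRuns, permWord_directSum hm hn, ← List.cons_append, peakCount_append_true_cons, descRuns,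
    descRuns]

lemma ascRuns_directSum (hm : 0 < m) (hn : 0 < n) (σ : Perm (Fin m)) (τ : Perm (Fin n)) :
    ascRuns (directSum σ τ) = peaks σ + (peaks (permCompl τ) + 1) := by
  rw [ascRuns, permWord_directSum hm hn, List.append_assoc, List.cons_append,
    peakCount_append_true_cons, peakCount_true_cons_append_false, peaks, peaks, permWord_permCompl]

end PermutationStatistics

section LongestAlternating

open Equiv

variable {n : ℕ}

lemma alternates_iff_getElem {α : Type*} [LinearOrder α] :
    ∀ {s : Bool} {l : List α}, Alternates s l ↔
      ∀ j (hj : j + 1 < l.length), Step (decide (j % 2 = 0) == s) l[j] l[j + 1]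
  | _, [] | _, [_] => by simp
  | s, x :: y :: l => by
    have hpar (j : ℕ) : (decide ((j + 1) % 2 = 0) == s) = (decide (j % 2 = 0) == !s) := by
      rcases Nat.mod_two_eq_zero_or_one j with hj | hj <;> cases s <;> simp [Nat.add_mod, hj]
    rw [alternates_cons_cons, alternates_iff_getElem]
    refine ⟨?_, fun h => ⟨by simpa using h 0 (by simp), fun j hj => ?_⟩⟩
    · rintro ⟨hxy, h⟩ (_ | j) hj
      · simpa using hxy
      · exact hpar j ▸ h j (by simpa using hj)
    · exact hpar j ▸ h (j + 1) (by simpa using hj)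

lemma isAltSeq_iff {σ : Perm (Fin n)} {s : Bool} {l : List (Fin n)} :
    IsAltSeq σ s l ↔ l.Sublist (List.finRange n) ∧ Alternates s (l.map σ) := by
  have hsorted : l.IsChain (· < ·) ↔ l.Sublist (List.finRange n) := by
    rw [List.isChain_iff_pairwise]
    refine ⟨fun h => ?_, fun h => (List.pairwise_lt_finRange n).sublist h⟩
    exact List.sublist_of_subperm_of_pairwise
      (List.subperm_of_subset h.nodup fun i _ => List.mem_finRange i) h
      (List.pairwise_lt_finRange n)
  refine (and_congr_left' hsorted).trans ?_
  rw [alternates_iff_getElem]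
  simp [Step, beq_iff_eq]

lemma exists_isAltSeq_length_iff {σ : Perm (Fin n)} {s : Bool} {k : ℕ} :
    (∃ l, IsAltSeq σ s l ∧ l.length = k) ↔
      ∃ m, m.Sublist (List.ofFn σ) ∧ Alternates s m ∧ m.length = k := by
  simp only [isAltSeq_iff, List.ofFn_eq_map, List.sublist_map_iff]
  constructor
  · rintro ⟨l, ⟨hl, halt⟩, rfl⟩
    exact ⟨l.map σ, ⟨l, hl, rfl⟩, halt, List.length_map _⟩
  · rintro ⟨_, ⟨l, hl, rfl⟩, halt, rfl⟩
    exact ⟨l, ⟨hl, halt⟩, (List.length_map _).symm⟩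

lemma altTypeLen_true_false (hn : 0 < n) (σ : Perm (Fin n)) :
    altTypeLen σ true false = 2 * peaks σ + 1 := by
  obtain ⟨x, l, hσ⟩ := List.exists_cons_of_ne_nil (l := List.ofFn σ) (by simpa using hn.ne')
  have hne := hσ ▸ isChain_ne_ofFn σ
  have hpeaks : altSteps true (stepWord (x :: l)) / 2 = peaks σ := by
    rw [peaks, permWord, hσ, (altSteps_div_two _).1]
  refine IsGreatest.csSup_eq ⟨?_, ?_⟩
  · obtain ⟨z, m, hsub, halt, hlen, -⟩ := exists_sublist_alternates true x l hne
    suffices ∃ m, m.Sublist (List.ofFn σ) ∧ Alternates true m ∧ m.length = 2 * peaks σ + 1 by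
      obtain ⟨m, hm, hlen⟩ := exists_isAltSeq_length_iff.mpr this
      exact ⟨m, hm, hlen, by simp⟩
    rw [hσ]
    rcases Nat.mod_two_eq_zero_or_one m.length with hpar | hpar
    · exact ⟨z :: m, hsub, halt, by rw [List.length_cons]; omega⟩
    · exact ⟨(z :: m).dropLast, (List.dropLast_sublist _).trans hsub, halt.dropLast, by
        rw [List.length_dropLast, List.length_cons]; omega⟩
  · rintro k ⟨l', hl', hlen, hpar⟩
    obtain ⟨m, hsub, halt, rfl⟩ := exists_isAltSeq_length_iff.mp ⟨l', hl', hlen⟩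
    have := halt.length_le_altSteps hne (hσ ▸ hsub)
    simp only [reduceCtorEq, if_false] at hpar
    omega

lemma isAltSeq_permCompl {σ : Perm (Fin n)} {s : Bool} {l : List (Fin n)} :
    IsAltSeq (permCompl σ) s l ↔ IsAltSeq σ (!s) l := by
  refine and_congr_right fun _ => forall₂_congr fun j hj => ?_
  cases s <;> by_cases h : j % 2 = 0 <;> simp [h]

lemma altTypeLen_false_true (σ : Perm (Fin n)) :
    altTypeLen σ false true = altTypeLen (permCompl σ) true false := by
  simp [altTypeLen, isAltSeq_permCompl]

end LongestAlternating

section Splits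

open OrderDual

variable {α : Type*} [LinearOrder α] {n : ℕ}

/-- The sequence `g` splits at `j`: its first `j` entries lie below all the others. -/
def SplitsAt (g : Fin n → α) (j : ℕ) : Prop :=
  ∀ i i' : Fin n, (i : ℕ) < j → j ≤ i' → g i < g i'

/-- The sequence `g` is cut into two nonempty parts, the first one below the second one. -/
def SumDecomposable (g : Fin n → α) : Prop := ∃ j, 0 < j ∧ j < n ∧ SplitsAt g j

/-- No four entries of the sequence `g` form the patterns 2413 or 3142. -/
def SeparableSeq (g : Fin n → α) : Prop :=
  ∀ a b c d : Fin n, a < b → b < c → c < d →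
    ¬(g c < g a ∧ g a < g d ∧ g d < g b) ∧ ¬(g b < g d ∧ g d < g a ∧ g a < g c)

lemma SeparableSeq.dual {g : Fin n → α} (h : SeparableSeq g) : SeparableSeq (toDual ∘ g) :=
  fun a b c d hab hbc hcd =>
    ⟨fun ⟨h₁, h₂, h₃⟩ => (h a b c d hab hbc hcd).2 ⟨h₃, h₂, h₁⟩,
      fun ⟨h₁, h₂, h₃⟩ => (h a b c d hab hbc hcd).1 ⟨h₃, h₂, h₁⟩⟩

lemma not_sumDecomposable_toDual {g : Fin n → α} (h : SumDecomposable g) :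
    ¬SumDecomposable (toDual ∘ g) := by
  rintro ⟨j', hj'₀, hj', h'⟩
  obtain ⟨j, hj₀, hj, h⟩ := h
  let first : Fin n := ⟨0, by omega⟩
  let last : Fin n := ⟨n - 1, by omega⟩
  exact lt_asymm (h first last hj₀ (Nat.le_sub_one_of_lt hj))
    (h' first last hj'₀ (Nat.le_sub_one_of_lt hj'))

lemma splitsAt_toDual_of_forall_last_lt {g : Fin (n + 1) → α}
    (h : ∀ i : Fin n, g (Fin.last n) < g i.castSucc) : SplitsAt (toDual ∘ g) n := by
  intro i i' hi hi'
  obtain rfl : i' = Fin.last n := Fin.ext (by rw [Fin.val_last]; omega)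
  exact h ⟨i, hi⟩

lemma splitsAt_of_init {g : Fin (n + 1) → α} {j : ℕ}
    (hinit : SplitsAt (g ∘ Fin.castSucc) j) (hlast : ∀ i : Fin (n + 1), (i : ℕ) < j →
      g i < g (Fin.last n)) : SplitsAt g j := by
  intro i i' hi hi'
  rcases Fin.eq_castSucc_or_eq_last i' with ⟨i', rfl⟩ | rfl
  · exact hinit ⟨i, lt_of_lt_of_le hi (hi'.trans i'.is_lt.le)⟩ i' hi hi'
  · exact hlast i hi

-- Let `c` be the first position whose entry is at least the last entry `v`. A split `j ≤ c` of the
-- other entries survives. If `c < j`, an entry below `v` between `c` and `j` would create 3142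
-- together with the entries at `c`, at `j` and `v`; so the sequence splits at `c`, or `v` is its
-- minimum.
lemma SumDecomposable.of_init {g : Fin (n + 1) → α} (hg : Function.Injective g)
    (hsep : SeparableSeq g) (h : SumDecomposable (g ∘ Fin.castSucc)) :
    SumDecomposable g ∨ SumDecomposable (toDual ∘ g) := by
  obtain ⟨j, hj₀, hjn, hj⟩ := h
  obtain ⟨c, hc : g (Fin.last n) ≤ g c, hmin⟩ :=
    wellFounded_lt.has_min {c | g (Fin.last n) ≤ g c} ⟨Fin.last n, le_rfl⟩
  have hlt (i : Fin (n + 1)) (hi : i < c) : g i < g (Fin.last n) :=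
    not_le.mp fun hle => hmin i hle hi
  rcases le_or_gt j c with hjc | hcj
  · exact .inl ⟨j, hj₀, hjn.trans n.lt_succ_self,
      splitsAt_of_init hj fun i hi => hlt i (Fin.lt_def.mpr (by omega))⟩
  have hge (i : Fin (n + 1)) (hi : c ≤ i) : g (Fin.last n) ≤ g i := by
    by_contra! hi'
    have hci : c < i := lt_of_le_of_ne hi (by rintro rfl; exact hi'.not_ge hc)
    have hclast : g (Fin.last n) < g c :=
      lt_of_le_of_ne hc (hg.ne (Fin.ne_of_gt (Fin.lt_def.mpr (by rw [Fin.val_last]; omega))))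
    have hcg (i' : Fin n) (hi' : j ≤ i') : g c < g i'.castSucc := hj ⟨c, by omega⟩ i' hcj hi'
    rcases lt_or_ge (i : ℕ) j with hij | hji
    · exact (hsep c i (Fin.castSucc ⟨j, hjn⟩) (Fin.last n) hci (Fin.lt_def.mpr hij)
        (Fin.castSucc_lt_last _)).2 ⟨hi', hclast, hcg _ le_rfl⟩
    · rcases Fin.eq_castSucc_or_eq_last i with ⟨i, rfl⟩ | rfl
      · exact lt_asymm hi' (hclast.trans (hcg i hji))
      · exact lt_irrefl _ hi'
  rcases Nat.eq_zero_or_pos (c : ℕ) with hc₀ | hc₀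
  · refine .inr ⟨n, by omega, n.lt_succ_self, splitsAt_toDual_of_forall_last_lt fun i => ?_⟩
    exact lt_of_le_of_ne (hge _ (Fin.le_def.mpr (by omega))) (hg.ne (Fin.castSucc_lt_last i).ne')
  · exact .inl ⟨c, hc₀, by omega, fun i i' hi hi' =>
      (hlt i hi).trans_le (hge i' hi')⟩

theorem SeparableSeq.sumDecomposable_or :
    ∀ {n : ℕ} {g : Fin n → α}, 2 ≤ n → Function.Injective g → SeparableSeq g →
      SumDecomposable g ∨ SumDecomposable (toDual ∘ g)
  | 2, g, _, hg, _ => by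
    rcases (hg.ne (by decide : (0 : Fin 2) ≠ 1)).lt_or_gt with hlt | hlt
    · exact .inl ⟨1, by simp, by simp, by simpa [SplitsAt, Fin.forall_fin_two] using hlt⟩
    · exact .inr ⟨1, by simp, by simp, by simpa [SplitsAt, Fin.forall_fin_two] using hlt⟩
  | n + 3, g, _, hg, h => by
    have hinit : SeparableSeq (g ∘ Fin.castSucc) := fun a b c d hab hbc hcd =>
      h a.castSucc b.castSucc c.castSucc d.castSucc hab hbc hcd
    rcases hinit.sumDecomposable_or (by omega) (hg.comp (Fin.castSucc_injective _)) with h' | h'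
    · exact h'.of_init hg h
    · exact (h'.of_init (toDual.injective.comp hg) h.dual).symm

end Splits

section Separability

open Equiv

variable {k m n : ℕ}

lemma ContainsPattern.of_permRev {σ : Perm (Fin n)} {τ : Fin k → Fin k}
    (h : ContainsPattern (permRev σ) τ) : ContainsPattern σ (τ ∘ Fin.rev) := by
  obtain ⟨f, hf, h⟩ := h
  exact ⟨Fin.rev ∘ f ∘ Fin.rev, Fin.rev_strictAnti.comp (hf.comp_strictAnti Fin.rev_strictAnti),
    fun a b => h a.rev b.rev⟩

lemma ContainsPattern.of_permCompl {σ : Perm (Fin n)} {τ : Fin k → Fin k}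
    (h : ContainsPattern (permCompl σ) τ) : ContainsPattern σ (Fin.rev ∘ τ) := by
  obtain ⟨f, hf, h⟩ := h
  exact ⟨f, hf, fun a b => by simpa using h b a⟩

lemma Separable.permRev {σ : Perm (Fin n)} (h : Separable σ) : Separable (permRev σ) := by
  refine ⟨fun h' => h.2 ?_, fun h' => h.1 ?_⟩ <;>
    · convert h'.of_permRev using 1
      decide

lemma Separable.permCompl {σ : Perm (Fin n)} (h : Separable σ) : Separable (permCompl σ) := by
  refine ⟨fun h' => h.2 ?_, fun h' => h.1 ?_⟩ <;>
    · convert h'.of_permCompl using 1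
      decide

lemma Separable.separableSeq {σ : Perm (Fin n)} (h : Separable σ) : SeparableSeq σ := by
  intro a b c d hab hbc hcd
  have hmono : StrictMono ![a, b, c, d] := by
    rw [Fin.strictMono_iff_lt_succ]
    simp [Fin.forall_fin_succ, hab, hbc, hcd]
  refine ⟨fun ⟨h₁, h₂, h₃⟩ => h.1 ⟨_, hmono, ?_⟩, fun ⟨h₁, h₂, h₃⟩ => h.2 ⟨_, hmono, ?_⟩⟩ <;>
    have := h₁.trans h₂ <;> have := h₂.trans h₃ <;> have := (h₁.trans h₂).trans h₃ <;>
    simp [Fin.forall_fin_succ, *, le_of_lt]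

lemma containsPattern_directSum_iff {τ : Fin k → Fin k} (hτ : ¬SumDecomposable τ)
    {σ : Perm (Fin m)} {σ' : Perm (Fin n)} :
    ContainsPattern (directSum σ σ') τ ↔ ContainsPattern σ τ ∨ ContainsPattern σ' τ := by
  constructor
  · rintro ⟨f, hf, h⟩
    by_cases hleft : ∀ a, (f a : ℕ) < m
    · obtain ⟨f', rfl⟩ : ∃ f' : Fin k → Fin m, f = Fin.castAdd n ∘ f' :=
        ⟨fun a => ⟨f a, hleft a⟩, rfl⟩
      exact .inl ⟨f', fun a b hab => hf hab, fun a b => by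
        simpa [(Fin.strictMono_castAdd n).lt_iff_lt] using h a b⟩
    by_cases hright : ∀ a, m ≤ f a
    · obtain ⟨f', rfl⟩ : ∃ f' : Fin k → Fin n, f = Fin.natAdd m ∘ f' :=
        ⟨fun a => ⟨f a - m, by have := hright a; omega⟩,
          funext fun a => Fin.ext (Nat.add_sub_of_le (hright a)).symm⟩
      exact .inr ⟨f', fun a b hab => by simpa using hf hab, fun a b => by simpa using h a b⟩
    push Not at hleft hright
    obtain ⟨b, hb⟩ := hright
    obtain ⟨c, hc : m ≤ f c, hmin⟩ := wellFounded_lt.has_min {c | m ≤ (f c : ℕ)} hleft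
    refine absurd ⟨c, ?_, c.is_lt, fun i i' hi hi' => (h i i').mpr ?_⟩ hτ
    · have : b < c := not_le.mp fun hcb => by have := Fin.le_def.mp (hf.monotone hcb); omega
      omega
    · have hi : (f i : ℕ) < m := not_le.mp fun hi' => hmin i hi' hi
      have hi' : m ≤ f i' := hc.trans (Fin.le_def.mp (hf.monotone (Fin.le_def.mpr hi')))
      exact Fin.lt_def.mpr (((directSum_lt_iff ..).mpr hi).trans_le
        (not_lt.mp fun hlt => hi'.not_gt ((directSum_lt_iff ..).mp hlt)))
  · rintro (⟨f, hf, h⟩ | ⟨f, hf, h⟩)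
    · exact ⟨Fin.castAdd n ∘ f, fun a b hab => hf hab, fun a b => by
        simpa [(Fin.strictMono_castAdd n).lt_iff_lt] using h a b⟩
    · exact ⟨Fin.natAdd m ∘ f, fun a b hab => by simpa using hf hab,
        fun a b => by simpa using h a b⟩

lemma separable_directSum_iff {σ : Perm (Fin m)} {τ : Perm (Fin n)} :
    Separable (directSum σ τ) ↔ Separable σ ∧ Separable τ := by
  have h₂₄₁₃ : ¬SumDecomposable (![1, 3, 0, 2] : Fin 4 → Fin 4) := by
    rintro ⟨j, hj₀, hj, h⟩
    have h₀₂ := h 0 2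
    have h₁₃ := h 1 3
    interval_cases j <;> simp at h₀₂ h₁₃
  have h₃₁₄₂ : ¬SumDecomposable (![2, 0, 3, 1] : Fin 4 → Fin 4) := by
    rintro ⟨j, hj₀, hj, h⟩
    have h₀₁ := h 0 1
    have h₀₃ := h 0 3
    interval_cases j <;> simp at h₀₁ h₀₃
  rw [Separable, containsPattern_directSum_iff h₂₄₁₃, containsPattern_directSum_iff h₃₁₄₂,
    Separable, Separable]
  tauto

end Separability

section Decomposition

open Equiv

variable {m n : ℕ}

lemma splitsAt_directSum_iff {j : ℕ} (hj : j ≤ m) {σ : Perm (Fin m)} {τ : Perm (Fin n)} :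
    SplitsAt (directSum σ τ) j ↔ SplitsAt σ j := by
  constructor
  · intro h i i' hi hi'
    simpa [(Fin.strictMono_castAdd n).lt_iff_lt] using
      h (i.castAdd n) (i'.castAdd n) (by simpa) (by simpa)
  · intro h i i' hi hi'
    induction i using Fin.addCases with
    | right i =>
      rw [Fin.val_natAdd] at hi
      omega
    | left i =>
      induction i' using Fin.addCases with
      | left i' => simpa [(Fin.strictMono_castAdd n).lt_iff_lt] using h i i' hi hi'
      | right i' =>
        rw [directSum_castAdd, directSum_natAdd]
        exact Fin.lt_def.mpr ((σ i).is_lt.trans_le (Nat.le_add_right m _))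

lemma splitsAt_self (σ : Perm (Fin n)) : SplitsAt σ n := fun _ i' _ hi' =>
  absurd i'.is_lt hi'.not_gt

lemma splitsAt_iff_forall_lt {σ : Perm (Fin n)} {j : ℕ} :
    SplitsAt σ j ↔ ∀ i : Fin n, (i : ℕ) < j → (σ i : ℕ) < j := by
  constructor
  · intro h i hi
    by_contra! hσi
    have hcard : #(Ici (⟨j, hσi.trans_lt (σ i).is_lt⟩ : Fin n)) ≤ #(Ioi (σ i)) :=
      card_le_card_of_injOn σ (fun i' hi' => by
        simpa using h i i' hi (by simpa [Fin.le_def] using hi')) σ.injective.injOn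
    simp only [Fin.card_Ici, Fin.card_Ioi] at hcard
    omega
  · intro h i i' hi hi'
    refine Fin.lt_def.mpr ((h i hi).trans_le (not_lt.mp fun hσi' => ?_))
    have hmaps : Set.MapsTo σ (Iio (⟨j, by omega⟩ : Fin n)) (Iio (⟨j, by omega⟩ : Fin n)) :=
      fun k hk => by simpa [Fin.lt_def] using h k (by simpa [Fin.lt_def] using hk)
    obtain ⟨k, hk, hki'⟩ := surjOn_of_injOn_of_card_le σ hmaps σ.injective.injOn le_rfl
      (show σ i' ∈ _ by simpa [Fin.lt_def] using hσi')
    obtain rfl := σ.injective hki'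
    exact hi'.not_gt (by simpa [Fin.lt_def] using hk)

lemma SplitsAt.exists_directSum {ρ : Perm (Fin (m + n))} (h : SplitsAt ρ m) :
    ∃ σ τ, directSum σ τ = ρ := by
  have hmaps : Set.MapsTo (finSumFinEquiv.symm.permCongr ρ)
      (Set.range (Sum.inl : Fin m → Fin m ⊕ Fin n)) (Set.range Sum.inl) := by
    rintro _ ⟨i, rfl⟩
    refine ⟨⟨ρ (i.castAdd n), splitsAt_iff_forall_lt.mp h _ i.is_lt⟩,
      finSumFinEquiv.injective (Fin.ext ?_)⟩
    simp [permCongr_apply]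
  obtain ⟨⟨σ, τ⟩, hp : sumCongr σ τ = _⟩ := Perm.mem_sumCongrHom_range_of_perm_mapsTo_inl hmaps
  exact ⟨σ, τ, by ext; simp [directSum, hp, permCongr_apply]⟩

lemma directSum_injective : Function.Injective
    fun p : Perm (Fin m) × Perm (Fin n) => directSum p.1 p.2 :=
  finSumFinEquiv.permCongr.injective.comp Perm.sumCongrHom_injective

lemma sumDecomposable_permRev_iff {σ : Perm (Fin n)} (hσ : Separable σ) (hn : 2 ≤ n) :
    SumDecomposable (permRev σ) ↔ ¬SumDecomposable σ := by
  have hdual : SumDecomposable (OrderDual.toDual ∘ σ) → SumDecomposable (permRev σ) := by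
    rintro ⟨j, hj₀, hjn, h⟩
    exact ⟨n - j, by omega, by omega, fun i i' hi hi' =>
      h i'.rev i.rev (by rw [Fin.val_rev]; omega) (by rw [Fin.val_rev]; omega)⟩
  have hrev : SumDecomposable (permRev σ) → SumDecomposable (OrderDual.toDual ∘ σ) := by
    rintro ⟨j, hj₀, hjn, h⟩
    refine ⟨n - j, by omega, by omega, fun i i' hi hi' => ?_⟩
    simpa using h i'.rev i.rev (by rw [Fin.val_rev]; omega) (by rw [Fin.val_rev]; omega)
  have hor := hσ.separableSeq.sumDecomposable_or hn σ.injective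
  exact ⟨fun h h' => not_sumDecomposable_toDual h' (hrev h), fun h => hdual (hor.resolve_left h)⟩

lemma bplus_eq_sInf_splitsAt (σ : Perm (Fin n)) : Bplus σ = sInf {j | 0 < j ∧ SplitsAt σ j} := by
  simp only [splitsAt_iff_forall_lt]
  rfl

lemma bplus_pos_and_splitsAt_bplus (hn : 0 < n) (σ : Perm (Fin n)) :
    0 < Bplus σ ∧ SplitsAt σ (Bplus σ) := by
  rw [bplus_eq_sInf_splitsAt]
  exact Nat.sInf_mem (s := {j | 0 < j ∧ SplitsAt σ j}) ⟨n, hn, splitsAt_self σ⟩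

lemma bplus_le {σ : Perm (Fin n)} {j : ℕ} (hj₀ : 0 < j) (h : SplitsAt σ j) : Bplus σ ≤ j := by
  rw [bplus_eq_sInf_splitsAt]
  exact Nat.sInf_le ⟨hj₀, h⟩

lemma SumDecomposable.pos {σ : Perm (Fin n)} (h : SumDecomposable σ) : 0 < n := by
  obtain ⟨j, -, hj, -⟩ := h
  omega

lemma SumDecomposable.bplus_lt {σ : Perm (Fin n)} (h : SumDecomposable σ) : Bplus σ < n := by
  obtain ⟨j, hj₀, hjn, hj⟩ := h
  exact (bplus_le hj₀ hj).trans_lt hjn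

lemma sumDecomposable_directSum (hm : 0 < m) (hn : 0 < n) (σ : Perm (Fin m)) (τ : Perm (Fin n)) :
    SumDecomposable (directSum σ τ) :=
  ⟨m, hm, by omega, (splitsAt_directSum_iff le_rfl).mpr (splitsAt_self σ)⟩

lemma bplus_directSum (hm : 0 < m) {σ : Perm (Fin m)} (hσ : ¬SumDecomposable σ)
    (τ : Perm (Fin n)) : Bplus (directSum σ τ) = m := by
  have hle : Bplus (directSum σ τ) ≤ m :=
    bplus_le hm ((splitsAt_directSum_iff le_rfl).mpr (splitsAt_self σ))
  obtain ⟨hpos, hsplit⟩ := bplus_pos_and_splitsAt_bplus (by omega) (directSum σ τ)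
  exact hle.antisymm (not_lt.mp fun hlt => hσ
    ⟨_, hpos, hlt, (splitsAt_directSum_iff hle).mp hsplit⟩)

lemma exists_directSum_of_bplus_eq {ρ : Perm (Fin (m + n))} (h : SumDecomposable ρ)
    (hm : Bplus ρ = m) : ∃ σ τ, directSum σ τ = ρ ∧ ¬SumDecomposable σ := by
  obtain ⟨σ, τ, rfl⟩ := SplitsAt.exists_directSum (hm ▸ (bplus_pos_and_splitsAt_bplus h.pos ρ).2)
  refine ⟨σ, τ, rfl, fun ⟨j, hj₀, hjm, hj⟩ => ?_⟩
  have := bplus_le hj₀ ((splitsAt_directSum_iff (n := n) (τ := τ) hjm.le).mpr hj)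
  omega

end Decomposition

section GeneratingFunctions

open Equiv PowerSeries

lemma mem_SEP {n : ℕ} {σ : Perm (Fin n)} : σ ∈ SEP n ↔ Separable σ := by simp [SEP]

lemma one_mem_SEP (n : ℕ) : (1 : Perm (Fin n)) ∈ SEP n := by
  have h {τ : Fin 4 → Fin 4} (hτ : ¬∀ a b, τ a < τ b ↔ a < b) :
      ¬ContainsPattern (1 : Perm (Fin n)) τ := fun ⟨_, hf, h⟩ =>
    hτ fun a b => (h a b).trans hf.lt_iff_lt
  exact mem_SEP.mpr ⟨h (by decide), h (by decide)⟩

lemma sum_SEP_permCompl {M : Type*} [AddCommMonoid M] {n : ℕ} (f : Perm (Fin n) → M) :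
    ∑ σ ∈ SEP n, f (permCompl σ) = ∑ σ ∈ SEP n, f σ := by
  refine sum_nbij' permCompl permCompl ?_ ?_ (by simp) (by simp) (by simp) <;>
    · intro σ hσ
      exact mem_SEP.mpr (mem_SEP.mp hσ).permCompl

/-- The separable permutations of a nonempty `Fin n` that are sum-indecomposable. -/
noncomputable def indecSEP (n : ℕ) : Finset (Perm (Fin n)) :=
  (SEP n).filter fun σ => 0 < n ∧ ¬SumDecomposable σ

/-- The sum-decomposable separable permutations. -/
noncomputable def decSEP (n : ℕ) : Finset (Perm (Fin n)) :=
  (SEP n).filter fun σ => SumDecomposable σ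

lemma mem_indecSEP {n : ℕ} {σ : Perm (Fin n)} :
    σ ∈ indecSEP n ↔ Separable σ ∧ 0 < n ∧ ¬SumDecomposable σ := by simp [indecSEP, mem_SEP]

lemma mem_decSEP {n : ℕ} {σ : Perm (Fin n)} :
    σ ∈ decSEP n ↔ Separable σ ∧ SumDecomposable σ := by simp [decSEP, mem_SEP]

lemma sum_indecSEP_eq_sum_decSEP_permRev {M : Type*} [AddCommMonoid M] {n : ℕ} (hn : 2 ≤ n)
    (f : Perm (Fin n) → M) : ∑ σ ∈ indecSEP n, f σ = ∑ σ ∈ decSEP n, f (permRev σ) := by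
  refine sum_nbij' permRev permRev ?_ ?_ (by simp) (by simp) (by simp) <;> intro σ hσ
  · obtain ⟨hsep, -, hindec⟩ := mem_indecSEP.mp hσ
    exact mem_decSEP.mpr ⟨hsep.permRev, (sumDecomposable_permRev_iff hsep hn).mpr hindec⟩
  · obtain ⟨hsep, hdec⟩ := mem_decSEP.mp hσ
    exact mem_indecSEP.mpr ⟨hsep.permRev, by omega,
      fun h => (sumDecomposable_permRev_iff hsep hn).mp h hdec⟩

variable {R : Type*} [CommRing R]

/-- The generating function by size of the nonempty separable permutations with weights `w`. -/
noncomputable def sepSeries (w : ∀ n, Perm (Fin n) → R) : R⟦X⟧ :=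
  .mk fun n => ∑ σ ∈ SEP n with 0 < n, w n σ

/-- The part of `sepSeries w` contributed by the sum-indecomposable permutations. -/
noncomputable def indecSeries (w : ∀ n, Perm (Fin n) → R) : R⟦X⟧ :=
  .mk fun n => ∑ σ ∈ indecSEP n, w n σ

/-- The part of `sepSeries w` contributed by the sum-decomposable permutations. -/
noncomputable def decSeries (w : ∀ n, Perm (Fin n) → R) : R⟦X⟧ :=
  .mk fun n => ∑ σ ∈ decSEP n, w n σ

lemma sepSeries_eq_indecSeries_add_decSeries (w : ∀ n, Perm (Fin n) → R) :
    sepSeries w = indecSeries w + decSeries w := by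
  ext n
  rw [map_add, sepSeries, indecSeries, decSeries, coeff_mk, coeff_mk, coeff_mk,
    ← sum_union (disjoint_left.mpr fun σ h h' => (mem_indecSEP.mp h).2.2 (mem_decSEP.mp h').2)]
  refine sum_congr (ext fun σ => ?_) fun _ _ => rfl
  have hpos : SumDecomposable σ → 0 < n := SumDecomposable.pos
  rw [mem_filter, mem_union, mem_indecSEP, mem_decSEP, mem_SEP]
  tauto

lemma sum_decSEP_filter_bplus_eq {u v w : ∀ n, Perm (Fin n) → R}
    (h : ∀ m n, 0 < m → 0 < n → ∀ (σ : Perm (Fin m)) (τ : Perm (Fin n)),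
      w (m + n) (directSum σ τ) = u m σ * v n τ) (m n : ℕ) :
    ∑ ρ ∈ decSEP (m + n) with Bplus ρ = m, w (m + n) ρ =
      (∑ σ ∈ indecSEP m, u m σ) * ∑ τ ∈ SEP n with 0 < n, v n τ := by
  rw [sum_mul_sum, ← sum_product']
  symm
  refine sum_nbij (fun p => directSum p.1 p.2) ?_ directSum_injective.injOn ?_ ?_
  · rintro ⟨σ, τ⟩ hp
    simp only [mem_product, mem_filter, mem_SEP, mem_indecSEP, mem_decSEP] at hp ⊢
    obtain ⟨⟨hσ, hm, hindec⟩, hτ, hn⟩ := hp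
    exact ⟨⟨separable_directSum_iff.mpr ⟨hσ, hτ⟩, sumDecomposable_directSum hm hn σ τ⟩,
      bplus_directSum hm hindec τ⟩
  · intro ρ hρ
    simp only [coe_filter, mem_decSEP, Set.mem_ofPred_eq] at hρ
    obtain ⟨⟨hsep, hdec⟩, hm⟩ := hρ
    obtain ⟨σ, τ, rfl, hindec⟩ := exists_directSum_of_bplus_eq hdec hm
    have hpos := (bplus_pos_and_splitsAt_bplus hdec.pos (directSum σ τ)).1
    have hlt := hdec.bplus_lt
    obtain ⟨hσ, hτ⟩ := separable_directSum_iff.mp hsep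
    refine ⟨(σ, τ), ?_, rfl⟩
    simp only [mem_coe, mem_product, mem_filter, mem_SEP, mem_indecSEP]
    exact ⟨⟨hσ, by omega, hindec⟩, hτ, by omega⟩
  · rintro ⟨σ, τ⟩ hp
    simp only [mem_product, mem_filter, mem_indecSEP] at hp
    exact (h m n hp.1.2.1 hp.2.2 σ τ).symm

lemma decSeries_eq_mul {u v w : ∀ n, Perm (Fin n) → R}
    (h : ∀ m n, 0 < m → 0 < n → ∀ (σ : Perm (Fin m)) (τ : Perm (Fin n)),
      w (m + n) (directSum σ τ) = u m σ * v n τ) :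
    decSeries w = indecSeries u * sepSeries v := by
  ext n
  rw [coeff_mul, decSeries, coeff_mk,
    ← sum_fiberwise_of_maps_to (t := antidiagonal n)
      (g := fun σ => (Bplus σ, n - Bplus σ)) fun σ hσ => by
        have := (mem_decSEP.mp hσ).2.bplus_lt
        exact HasAntidiagonal.mem_antidiagonal.mpr (Nat.add_sub_of_le this.le)]
  refine sum_congr rfl fun ⟨k, l⟩ hkl => ?_
  obtain rfl := mem_antidiagonal.mp hkl
  rw [indecSeries, sepSeries, coeff_mk, coeff_mk, ← sum_decSEP_filter_bplus_eq h k l]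
  refine sum_congr (filter_congr fun σ _ => ?_) fun _ _ => rfl
  simp only [Prod.mk.injEq]
  omega

lemma indecSeries_eq_add_decSeries_permRev (w : ∀ n, Perm (Fin n) → R) :
    indecSeries w = C (w 1 1) * X + decSeries fun n σ => w n (permRev σ) := by
  ext n
  rw [map_add, coeff_C_mul, coeff_X, indecSeries, decSeries, coeff_mk, coeff_mk]
  match n with
  | 0 => simp [indecSEP, decSEP, SumDecomposable]
  | 1 =>
    have h (σ : Perm (Fin 1)) : ¬SumDecomposable σ := fun ⟨j, hj₀, hj, _⟩ => by omega
    have huniv : SEP 1 = {1} := by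
      ext σ
      simp [Subsingleton.elim σ 1, one_mem_SEP]
    simp [indecSEP, decSEP, h, huniv]
  | n + 2 =>
    rw [if_neg (by omega), mul_zero, zero_add]
    exact sum_indecSEP_eq_sum_decSEP_permRev (by omega) (w (n + 2))

lemma sepSeries_permCompl (w : ∀ n, Perm (Fin n) → R) :
    sepSeries (fun n σ => w n (permCompl σ)) = sepSeries w := by
  ext n
  simp only [sepSeries, coeff_mk, filter_const]
  split
  · exact sum_SEP_permCompl (w n)
  · simp

lemma sepSeries_const_mul (c : R) (w : ∀ n, Perm (Fin n) → R) :
    sepSeries (fun n σ => c * w n σ) = C c * sepSeries w := by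
  ext n
  simp [sepSeries, mul_sum]

/-- The generating function of the nonempty separable permutations by size, each one weighted by
`t` to the number of its peaks. -/
noncomputable def peakSeries (t : R) : R⟦X⟧ := sepSeries fun _ σ => t ^ peaks σ

lemma peaks_one : peaks (1 : Perm (Fin 1)) = 0 := by simp [peaks, permWord]

lemma descRuns_one : descRuns (1 : Perm (Fin 1)) = 0 := by simp [descRuns, permWord]

-- Here `G`, `F` count indecomposable permutations by peaks and by descent runs, `S` counts all of
-- them by descent runs.
theorem peakSeries_cubic (t : R) :
    peakSeries t = X * (1 + 2 * peakSeries t + C t * peakSeries t ^ 2) +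
      C t * peakSeries t ^ 3 := by
  set P := peakSeries t with hP
  set S := sepSeries fun _ σ => t ^ descRuns σ
  set G := indecSeries fun _ σ => t ^ peaks σ
  set F := indecSeries fun _ σ => t ^ descRuns σ
  have hpeaks : decSeries (fun _ σ => t ^ peaks σ) = G * S := decSeries_eq_mul
    fun m n hm hn σ τ => by rw [peaks_directSum hm hn, pow_add]
  have hdesc : decSeries (fun _ σ => t ^ descRuns σ) = F * S := decSeries_eq_mul
    fun m n hm hn σ τ => by rw [descRuns_directSum hm hn, pow_add]
  have hasc : decSeries (fun _ σ => t ^ ascRuns σ) = G * (C t * P) := by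
    rw [hP, peakSeries, ← sepSeries_permCompl, ← sepSeries_const_mul]
    exact decSeries_eq_mul fun m n hm hn σ τ => by
      rw [ascRuns_directSum hm hn, pow_add, pow_succ']
  have hPG : P = G + G * S := by
    rw [hP, peakSeries, sepSeries_eq_indecSeries_add_decSeries, hpeaks]
  have hSF : S = F + F * S := by
    rw [← hdesc, ← sepSeries_eq_indecSeries_add_decSeries]
  have hGX : G = X + G * S := by
    rw [← hpeaks]
    simpa [peaks_permRev, peaks_one] using
      indecSeries_eq_add_decSeries_permRev fun _ σ => t ^ peaks σ
  have hFX : F = X + G * (C t * P) := by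
    rw [← hasc]
    simpa [descRuns_permRev, descRuns_one] using
      indecSeries_eq_add_decSeries_permRev fun _ σ => t ^ descRuns σ
  have hG : 2 * G = X + P := by linear_combination hGX - hPG
  have hS : S = (X + G * (C t * P)) * (1 + S) := by linear_combination hSF + (1 + S) * hFX
  have hGS : G * S = (X + G * (C t * P)) * P := by
    linear_combination G * hS - (X + G * (C t * P)) * hPG
  linear_combination 2 * hGX - hG + 2 * hGS + C t * P ^ 2 * hG

end GeneratingFunctions

section Moments

open PowerSeries

variable {R : Type*} [CommRing R]

/-- The coefficient of `s ^ i` in a power series in `x` over `R[s]`, as a power series in `x`. -/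
noncomputable def innerCoeff (i : ℕ) (F : PowerSeries (Polynomial R)) : R⟦X⟧ :=
  .mk fun n => (coeff n F).coeff i

lemma innerCoeff_add (i : ℕ) (F G : PowerSeries (Polynomial R)) :
    innerCoeff i (F + G) = innerCoeff i F + innerCoeff i G := by
  ext n
  simp [innerCoeff]

lemma innerCoeff_mul (i : ℕ) (F G : PowerSeries (Polynomial R)) :
    innerCoeff i (F * G) = ∑ p ∈ antidiagonal i, innerCoeff p.1 F * innerCoeff p.2 G := by
  ext n
  simp only [innerCoeff, coeff_mk, coeff_mul, Polynomial.finsetSum_coeff, Polynomial.coeff_mul,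
    map_sum]
  exact Finset.sum_comm

lemma innerCoeff_zero_mul (F G : PowerSeries (Polynomial R)) :
    innerCoeff 0 (F * G) = innerCoeff 0 F * innerCoeff 0 G := by
  simp [innerCoeff_mul]

lemma innerCoeff_one_mul (F G : PowerSeries (Polynomial R)) :
    innerCoeff 1 (F * G) =
      innerCoeff 0 F * innerCoeff 1 G + innerCoeff 1 F * innerCoeff 0 G := by
  simp [innerCoeff_mul, Finset.Nat.antidiagonal_succ]

lemma innerCoeff_two_mul (F G : PowerSeries (Polynomial R)) :
    innerCoeff 2 (F * G) =
      innerCoeff 0 F * innerCoeff 2 G + innerCoeff 1 F * innerCoeff 1 G +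
        innerCoeff 2 F * innerCoeff 0 G := by
  simp [innerCoeff_mul, Finset.Nat.antidiagonal_succ, add_assoc]

lemma innerCoeff_X (i : ℕ) : innerCoeff (R := R) i X = if i = 0 then X else 0 := by
  ext n
  simp only [innerCoeff, coeff_mk, coeff_X]
  split_ifs <;> simp_all [Polynomial.coeff_one, coeff_X]

lemma innerCoeff_C (i : ℕ) (p : Polynomial R) : innerCoeff i (C p) = C (p.coeff i) := by
  ext n
  simp only [innerCoeff, coeff_mk, coeff_C]
  split_ifs <;> simp

lemma innerCoeff_one (i : ℕ) : innerCoeff (R := R) i 1 = if i = 0 then 1 else 0 := by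
  rw [← map_one C, innerCoeff_C, Polynomial.coeff_one]
  split_ifs <;> simp_all

/-- The generating function by size of the sums of `(peaks σ).choose i`, that is, of the
unnormalized `i`-th binomial moments of the number of peaks. -/
noncomputable def momentSeries (i : ℕ) : ℝ⟦X⟧ := sepSeries fun _ σ => ((peaks σ).choose i : ℝ)

lemma innerCoeff_peakSeries (i : ℕ) :
    innerCoeff i (peakSeries (1 + Polynomial.X)) = momentSeries i := by
  ext n
  simp [innerCoeff, peakSeries, sepSeries, momentSeries, Polynomial.coeff_one_add_X_pow]

lemma constantCoeff_momentSeries (i : ℕ) : constantCoeff (momentSeries i) = 0 := by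
  rw [← coeff_zero_eq_constantCoeff_apply]
  simp [momentSeries, sepSeries]

local notation "U" => momentSeries 0
local notation "V" => momentSeries 1
local notation "W" => momentSeries 2

-- The coefficients of `s ^ 0`, `s ^ 1`, `s ^ 2` in the cubic equation at `t = 1 + s`.
lemma momentSeries_cubic :
    U = X * (1 + U) ^ 2 + U ^ 3 ∧
    V = X * (2 * V + 2 * U * V + U ^ 2) + 3 * U ^ 2 * V + U ^ 3 ∧
    W = X * (2 * W + 2 * U * W + V ^ 2 + 2 * U * V) + 3 * U ^ 2 * W + 3 * U * V ^ 2 +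
      3 * U ^ 2 * V := by
  have h := peakSeries_cubic (1 + Polynomial.X : Polynomial ℝ)
  rw [← one_add_one_eq_two (R := PowerSeries (Polynomial ℝ)), map_add, map_one] at h
  have h₀ := congrArg (innerCoeff 0) h
  have h₁ := congrArg (innerCoeff 1) h
  have h₂ := congrArg (innerCoeff 2) h
  simp only [pow_succ, pow_zero, innerCoeff_zero_mul, innerCoeff_one_mul, innerCoeff_two_mul,
    innerCoeff_add, innerCoeff_X, innerCoeff_one, innerCoeff_C, innerCoeff_peakSeries,
    Polynomial.coeff_X, map_one, map_zero, if_true, one_ne_zero, OfNat.ofNat_ne_zero,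
    OfNat.one_ne_ofNat, if_false] at h₀ h₁ h₂
  exact ⟨by linear_combination h₀, by linear_combination h₁, by linear_combination h₂⟩

local notation "D" => derivative ℝ

lemma one_add_momentSeries_ne_zero : 1 + U ≠ 0 := fun h => by
  simpa [constantCoeff_momentSeries] using congrArg constantCoeff h

lemma momentSeries_discrim_ne_zero : 1 - 2 * U - U ^ 2 ≠ 0 := fun h => by
  simpa [constantCoeff_momentSeries] using congrArg constantCoeff h

lemma momentSeries_zero_eq : U * (1 - U) = X * (1 + U) :=
  mul_left_cancel₀ one_add_momentSeries_ne_zero <| by linear_combination momentSeries_cubic.1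

lemma momentSeries_one_eq : (1 - 2 * U - U ^ 2) * V = U ^ 2 * (X + U) := by
  linear_combination momentSeries_cubic.2.1 - 2 * V * momentSeries_zero_eq

lemma momentSeries_two_eq :
    (1 - 2 * U - U ^ 2) * W = X * (V ^ 2 + 2 * U * V) + 3 * U * V ^ 2 + 3 * U ^ 2 * V := by
  linear_combination momentSeries_cubic.2.2 - 2 * W * momentSeries_zero_eq

lemma derivative_momentSeries_zero : (1 - 2 * U - U ^ 2) * D U = (1 + U) ^ 2 := by
  have h := congrArg D momentSeries_zero_eq
  simp only [Derivation.leibniz, map_add, map_sub, smul_eq_mul, derivative_X,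
    Derivation.map_one_eq_zero] at h
  linear_combination (1 + U) * h - D U * momentSeries_zero_eq

lemma derivative_derivative_momentSeries_zero :
    (1 - 2 * U - U ^ 2) ^ 3 * D (D U) = 4 * (1 + U) ^ 3 := by
  have h := congrArg D derivative_momentSeries_zero
  simp only [← one_add_one_eq_two (R := ℝ⟦X⟧), pow_two, Derivation.leibniz, map_add, map_sub,
    smul_eq_mul, Derivation.map_one_eq_zero] at h
  linear_combination (1 - 2 * U - U ^ 2) ^ 2 * h + 2 * (1 + U) *
    ((1 - 2 * U - U ^ 2) * (1 + D U) + (1 + U) ^ 2) * derivative_momentSeries_zero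

section Field

variable {K : Type*} [Field K] {u x z v w d e : K}

-- The curve `u * (1 - u) = x * (1 + u)` is rational, so each claim is an identity of rational
-- functions of `u`.
lemma ode_of_curve (hu : 1 + u ≠ 0) (hz₀ : z ≠ 0) (hz : z = 1 - 2 * u - u ^ 2)
    (hx : u * (1 - u) = x * (1 + u)) (hd : z * d = (1 + u) ^ 2) :
    (1 - 6 * x + x ^ 2) * d = 1 + x + (x - 3) * u := by
  rw [eq_div_of_mul_eq hu hx.symm, eq_div_of_mul_eq hz₀ ((mul_comm _ _).trans hd)]
  field_simp
  rw [hz]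
  ring

lemma firstMoment_of_curve (hu : 1 + u ≠ 0) (hz₀ : z ≠ 0) (hz : z = 1 - 2 * u - u ^ 2)
    (hx : u * (1 - u) = x * (1 + u)) (hd : z * d = (1 + u) ^ 2)
    (hv : z * v = u ^ 2 * (x + u)) :
    4 * v = (x + x ^ 2) * d - (2 + x) * u + x := by
  rw [eq_div_of_mul_eq hz₀ ((mul_comm _ _).trans hv), eq_div_of_mul_eq hu hx.symm,
    eq_div_of_mul_eq hz₀ ((mul_comm _ _).trans hd)]
  field_simp
  rw [hz]
  ring

lemma secondMoment_of_curve (hu : 1 + u ≠ 0) (hz₀ : z ≠ 0) (hz : z = 1 - 2 * u - u ^ 2)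
    (hx : u * (1 - u) = x * (1 + u)) (hd : z * d = (1 + u) ^ 2)
    (he : z ^ 3 * e = 4 * (1 + u) ^ 3) (hv : z * v = u ^ 2 * (x + u))
    (hw : z * w = x * (v ^ 2 + 2 * u * v) + 3 * u * v ^ 2 + 3 * u ^ 2 * v) :
    8 * w = 3 * u - 2 * x * d + 2 * x * (x * d + x ^ 2 * e) + x ^ 2 * u - x + x ^ 3 := by
  rw [eq_div_of_mul_eq hz₀ ((mul_comm _ _).trans hw),
    eq_div_of_mul_eq hz₀ ((mul_comm _ _).trans hv), eq_div_of_mul_eq hu hx.symm,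
    eq_div_of_mul_eq hz₀ ((mul_comm _ _).trans hd),
    eq_div_of_mul_eq (pow_ne_zero 3 hz₀) ((mul_comm _ _).trans he)]
  field_simp
  rw [hz]
  ring

end Field

local notation "φ" => algebraMap ℝ⟦X⟧ (FractionRing ℝ⟦X⟧)

theorem momentSeries_closed_forms :
    (1 - 6 * X + X ^ 2) * D U = 1 + X + (X - 3) * U ∧
    4 * V = (X + X ^ 2) * D U - (2 + X) * U + X ∧
    8 * W = 3 * U - 2 * X * D U + 2 * X * (X * D U + X ^ 2 * D (D U)) + X ^ 2 * U - X + X ^ 3 := by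
  have hinj : Function.Injective φ := IsFractionRing.injective _ _
  have hu := (map_ne_zero_iff φ hinj).mpr one_add_momentSeries_ne_zero
  have hz := (map_ne_zero_iff φ hinj).mpr momentSeries_discrim_ne_zero
  have hx := congrArg φ momentSeries_zero_eq
  have hd := congrArg φ derivative_momentSeries_zero
  have he := congrArg φ derivative_derivative_momentSeries_zero
  have hv := congrArg φ momentSeries_one_eq
  have hw := congrArg φ momentSeries_two_eq
  refine ⟨hinj ?_, hinj ?_, hinj ?_⟩ <;>
    simp only [map_add, map_sub, map_mul, map_pow, map_one, map_ofNat] at hu hz hx hd he hv hw ⊢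
  · exact ode_of_curve hu hz rfl hx hd
  · exact firstMoment_of_curve hu hz rfl hx hd hv
  · exact secondMoment_of_curve hu hz rfl hx hd he hv hw

/-- The sum of `(peaks σ).choose i` over the separable permutations `σ` of `n` points, that is,
`(SEP n).card` times the `i`-th binomial moment of the number of peaks. -/
noncomputable def binomMoment (i n : ℕ) : ℝ := ∑ σ ∈ SEP n, ((peaks σ).choose i : ℝ)

lemma coeff_momentSeries_succ (i n : ℕ) :
    coeff (n + 1) (momentSeries i) = binomMoment i (n + 1) := by
  simp [momentSeries, sepSeries, binomMoment]

lemma coeff_ofNat_mul (k n : ℕ) [k.AtLeastTwo] (F : R⟦X⟧) :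
    coeff n (ofNat(k) * F) = ofNat(k) * coeff n F := by
  rw [← map_ofNat C k, coeff_C_mul]

lemma binomMoment_zero_rec (n : ℕ) :
    (n + 3) * binomMoment 0 (n + 3) =
      (6 * n + 9) * binomMoment 0 (n + 2) - n * binomMoment 0 (n + 1) := by
  have h := congrArg (coeff (n + 2)) momentSeries_closed_forms.1
  simp only [add_mul, sub_mul, mul_assoc, one_mul, pow_two, map_add, map_sub, coeff_ofNat_mul,
    coeff_succ_X_mul, coeff_derivative, coeff_one, coeff_X, coeff_momentSeries_succ] at h
  push_cast at h
  linear_combination h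

lemma binomMoment_one_eq (n : ℕ) :
    4 * binomMoment 1 (n + 2) = n * (binomMoment 0 (n + 2) + binomMoment 0 (n + 1)) := by
  have h := congrArg (coeff (n + 2)) momentSeries_closed_forms.2.1
  simp only [add_mul, mul_assoc, pow_two, map_add, map_sub, coeff_ofNat_mul,
    coeff_succ_X_mul, coeff_derivative, coeff_X, coeff_momentSeries_succ] at h
  push_cast at h
  linear_combination h

lemma binomMoment_two_eq (n : ℕ) :
    8 * binomMoment 2 (n + 4) = -(2 * n + 5) * binomMoment 0 (n + 4) +
      2 * (n + 3) ^ 2 * binomMoment 0 (n + 3) + binomMoment 0 (n + 2) := by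
  have h := congrArg (coeff (n + 4)) momentSeries_closed_forms.2.2
  simp only [mul_add, mul_assoc, pow_two, map_add, map_sub, coeff_ofNat_mul,
    coeff_succ_X_mul, coeff_derivative, coeff_X, coeff_X_pow, coeff_momentSeries_succ] at h
  push_cast at h
  linear_combination h

lemma binomMoment_zero (n : ℕ) : binomMoment 0 n = (SEP n).card := by simp [binomMoment]

lemma binomMoment_zero_pos (n : ℕ) : 0 < binomMoment 0 n := by
  rw [binomMoment_zero]
  exact_mod_cast card_pos.mpr ⟨1, one_mem_SEP n⟩

end Moments

section Recurrences

lemma tendsto_zero_of_le_mul_add {u b : ℕ → ℝ} {c : ℝ} (hc₀ : 0 ≤ c) (hc₁ : c < 1)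
    (hu : ∀ n, 0 ≤ u n) (h : ∀ᶠ n in atTop, u (n + 1) ≤ c * u n + b n)
    (hb : Tendsto b atTop (nhds 0)) : Tendsto u atTop (nhds 0) := by
  refine tendsto_order.mpr ⟨fun a ha => .of_forall fun n => ha.trans_le (hu n), fun ε hε => ?_⟩
  have hδ : 0 < ε / 2 * (1 - c) := mul_pos (half_pos hε) (sub_pos.mpr hc₁)
  obtain ⟨N, hN⟩ := eventually_atTop.mp (h.and (hb.eventually_lt_const hδ))
  have hcontract (k : ℕ) : u (k + N) - ε / 2 ≤ c ^ k * (u N - ε / 2) := by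
    induction k with
    | zero => simp
    | succ k ih =>
      obtain ⟨hstep, hsmall⟩ := hN (k + N) (Nat.le_add_left N k)
      calc u (k + 1 + N) - ε / 2 = u (k + N + 1) - ε / 2 := by rw [Nat.add_right_comm]
        _ ≤ c * (u (k + N) - ε / 2) := by linarith
        _ ≤ c * (c ^ k * (u N - ε / 2)) := mul_le_mul_of_nonneg_left ih hc₀
        _ = c ^ (k + 1) * (u N - ε / 2) := by ring
  have hpow : Tendsto (fun k : ℕ => c ^ k * (u N - ε / 2)) atTop (nhds 0) := by
    simpa using (tendsto_pow_atTop_nhds_zero_of_lt_one hc₀ hc₁).mul_const (u N - ε / 2)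
  rw [← map_add_atTop_eq_nat N, eventually_map]
  filter_upwards [hpow.eventually_lt_const (half_pos hε)] with k hk
  linarith [hcontract k]

variable {𝕜 : Type*} [NormedField 𝕜] {x α β : ℕ → 𝕜}

lemma tendsto_zero_of_linear_recurrence {c : ℝ} (hc : c < 1)
    (h : ∀ n, x (n + 1) = α n * x n + β n) (hα : ∀ᶠ n in atTop, ‖α n‖ ≤ c)
    (hβ : Tendsto β atTop (nhds 0)) : Tendsto x atTop (nhds 0) := by
  obtain ⟨n₀, hn₀⟩ := hα.exists
  rw [tendsto_zero_iff_norm_tendsto_zero] at hβ ⊢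
  refine tendsto_zero_of_le_mul_add ((norm_nonneg _).trans hn₀) hc (fun n => norm_nonneg _) ?_ hβ
  filter_upwards [hα] with n hn
  calc ‖x (n + 1)‖ ≤ ‖α n‖ * ‖x n‖ + ‖β n‖ := by
        rw [h, ← norm_mul]
        exact norm_add_le _ _
    _ ≤ c * ‖x n‖ + ‖β n‖ := by gcongr

lemma tendsto_of_linear_recurrence {a b : 𝕜} (h : ∀ n, x (n + 1) = α n * x n + β n)
    (hα : Tendsto α atTop (nhds a)) (ha : ‖a‖ < 1) (hβ : Tendsto β atTop (nhds b)) :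
    Tendsto x atTop (nhds (b / (1 - a))) := by
  set l := b / (1 - a) with hl
  have hfix : a * l + b - l = 0 := by
    have : 1 - a ≠ 0 := sub_ne_zero.mpr fun h => by simp [← h] at ha
    rw [hl]
    field_simp
    ring
  obtain ⟨c, hac, hc⟩ := exists_between ha
  rw [← tendsto_sub_nhds_zero_iff]
  refine tendsto_zero_of_linear_recurrence (β := fun n => α n * l + β n - l) hc
    (fun n => by rw [h]; ring) (hα.norm.eventually_le_const hac) ?_
  simpa only [hfix] using ((hα.mul_const l).add hβ).sub_const l

end Recurrences

section Ratio

/-- The ratio of the numbers of separable permutations of `n + 1` and of `n + 2` points. -/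
noncomputable def sepRatio (n : ℕ) : ℝ := binomMoment 0 (n + 1) / binomMoment 0 (n + 2)

/-- The limit of `sepRatio`: the smaller root of `1 - 6x + x²`, that is, the radius of convergence
of the generating function of the separable permutations. -/
noncomputable def sepRadius : ℝ := 3 - 2 * √2

local notation "q" => sepRatio
local notation "ρ" => sepRadius

lemma sepRadius_sq : ρ ^ 2 = 6 * ρ - 1 := by
  have := Real.sq_sqrt (zero_le_two (α := ℝ))
  rw [sepRadius]
  linear_combination 4 * this

lemma sepRadius_pos : 0 < ρ := by
  have : √2 < 3 / 2 := (Real.sqrt_lt' (by norm_num)).mpr (by norm_num)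
  rw [sepRadius]
  linarith

lemma sepRadius_lt_one : ρ < 1 := by
  have : 1 < √2 := Real.lt_sqrt_of_sq_lt (by norm_num)
  rw [sepRadius]
  linarith

lemma binomMoment_zero_eq_sepRatio_mul (n : ℕ) :
    binomMoment 0 (n + 1) = q n * binomMoment 0 (n + 2) :=
  (div_mul_cancel₀ _ (binomMoment_zero_pos _).ne').symm

lemma sepRatio_pos (n : ℕ) : 0 < q n := div_pos (binomMoment_zero_pos _) (binomMoment_zero_pos _)

lemma sepRatio_succ (n : ℕ) : q (n + 1) * (6 * n + 9 - n * q n) = n + 3 := by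
  refine mul_right_cancel₀ (binomMoment_zero_pos (n + 3)).ne' ?_
  rw [binomMoment_zero_rec, binomMoment_zero_eq_sepRatio_mul n,
    binomMoment_zero_eq_sepRatio_mul (n + 1)]
  ring

lemma sepRatio_succ_le_one (n : ℕ) : q (n + 1) ≤ 1 := by
  suffices h : n * q n ≤ n by
    nlinarith [sepRatio_succ n, sepRatio_pos (n + 1)]
  induction n with
  | zero => simp
  | succ n ih =>
    have : q (n + 1) ≤ 1 := by nlinarith [sepRatio_succ n, sepRatio_pos (n + 1)]
    exact mul_le_of_le_one_right (by positivity) this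

lemma sepRatio_succ_sub (n : ℕ) :
    q (n + 1) - ρ = q (n + 1) / (n + 3) * (ρ * (n * (q n - ρ)) + 3 - 9 * ρ) := by
  rw [div_mul_eq_mul_div, eq_div_iff (by positivity)]
  linear_combination ρ * sepRatio_succ n + n * q (n + 1) * sepRadius_sq

lemma tendsto_add_three_inv : Tendsto (fun n : ℕ => ((n : ℝ) + 3)⁻¹) atTop (nhds 0) :=
  (tendsto_natCast_atTop_atTop.atTop_add tendsto_const_nhds).inv_tendsto_atTop

lemma tendsto_sepRatio : Tendsto q atTop (nhds ρ) := by
  rw [← tendsto_sub_nhds_zero_iff]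
  refine tendsto_zero_of_linear_recurrence sepRadius_lt_one
    (α := fun n => q (n + 1) * (n * ((n : ℝ) + 3)⁻¹) * ρ)
    (β := fun n => q (n + 1) * ((3 - 9 * ρ) * ((n : ℝ) + 3)⁻¹))
    (fun n => by rw [sepRatio_succ_sub]; ring) (.of_forall fun n => ?_) ?_
  · have hfrac : (n : ℝ) * ((n : ℝ) + 3)⁻¹ ≤ 1 := by
      rw [← div_eq_mul_inv]
      exact div_le_one_of_le₀ (by linarith) (by positivity)
    have hq := sepRatio_pos (n + 1)
    have hρ := sepRadius_pos
    rw [norm_of_nonneg (by positivity)]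
    exact mul_le_of_le_one_left hρ.le
      (mul_le_one₀ (sepRatio_succ_le_one n) (by positivity) hfrac)
  · have herr : Tendsto (fun n : ℕ => ‖(3 - 9 * ρ) * ((n : ℝ) + 3)⁻¹‖) atTop (nhds 0) := by
      simpa only [mul_zero, norm_zero] using (tendsto_add_three_inv.const_mul (3 - 9 * ρ)).norm
    refine squeeze_zero_norm (fun n => ?_) herr
    rw [norm_mul, norm_of_nonneg (sepRatio_pos _).le]
    exact mul_le_of_le_one_left (norm_nonneg _) (sepRatio_succ_le_one n)

lemma tendsto_mul_sepRatio_sub :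
    Tendsto (fun n => n * (q n - ρ)) atTop (nhds (3 * ρ / 2)) := by
  have hq := (tendsto_add_atTop_iff_nat 1).mpr tendsto_sepRatio
  have hw : Tendsto (fun n : ℕ => (1 - 2 * ((n : ℝ) + 3)⁻¹) * q (n + 1)) atTop (nhds ρ) := by
    simpa using ((tendsto_add_three_inv.const_mul 2).const_sub 1).mul hq
  have hlim : ρ * (3 - 9 * ρ) / (1 - ρ * ρ) = 3 * ρ / 2 := by
    have : 1 - ρ * ρ ≠ 0 := by nlinarith [sepRadius_pos, sepRadius_lt_one]
    rw [div_eq_iff this]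
    linear_combination 3 / 2 * ρ * sepRadius_sq
  rw [← hlim]
  refine tendsto_of_linear_recurrence (α := fun n => (1 - 2 * ((n : ℝ) + 3)⁻¹) * q (n + 1) * ρ)
    (β := fun n => (1 - 2 * ((n : ℝ) + 3)⁻¹) * q (n + 1) * (3 - 9 * ρ)) (fun n => ?_)
    (hw.mul_const ρ) ?_ (hw.mul_const _)
  · rw [sepRatio_succ_sub]
    push_cast
    field_simp
    ring
  · rw [norm_mul, norm_of_nonneg sepRadius_pos.le]
    nlinarith [sepRadius_pos, sepRadius_lt_one]

end Ratio

section Variance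

open Equiv

variable {n : ℕ}

lemma sepExp_const (c : ℝ) : sepExp n (fun _ => c) = c := by
  have : ((SEP n).card : ℝ) ≠ 0 := by exact_mod_cast (card_pos.mpr ⟨1, one_mem_SEP n⟩).ne'
  simp [sepExp, this]

lemma sepExp_add (f g : Perm (Fin n) → ℝ) :
    sepExp n (fun σ => f σ + g σ) = sepExp n f + sepExp n g := by
  simp only [sepExp, sum_add_distrib, add_div]

lemma sepExp_const_mul (c : ℝ) (f : Perm (Fin n) → ℝ) :
    sepExp n (fun σ => c * f σ) = c * sepExp n f := by
  simp only [sepExp, ← mul_sum, mul_div_assoc]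

lemma sepExp_permCompl (f : Perm (Fin n) → ℝ) :
    sepExp n (fun σ => f (permCompl σ)) = sepExp n f := by
  rw [sepExp, sum_SEP_permCompl, sepExp]

lemma sepVar_permCompl (f : Perm (Fin n) → ℝ) :
    sepVar n (fun σ => f (permCompl σ)) = sepVar n f := by
  rw [sepVar, sepExp_permCompl, sepExp_permCompl fun σ => (f σ - sepExp n f) ^ 2, sepVar]

lemma sepVar_const_mul_add_const (a b : ℝ) (f : Perm (Fin n) → ℝ) :
    sepVar n (fun σ => a * f σ + b) = a ^ 2 * sepVar n f := by
  have hmean : sepExp n (fun σ => a * f σ + b) = a * sepExp n f + b := by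
    rw [sepExp_add (fun σ => a * f σ) fun _ => b, sepExp_const_mul, sepExp_const]
  rw [sepVar, hmean, sepVar, ← sepExp_const_mul (a ^ 2)]
  refine congrArg (sepExp n) (funext fun σ => ?_)
  ring

lemma sepVar_eq_sub (f : Perm (Fin n) → ℝ) :
    sepVar n f = sepExp n (fun σ => f σ ^ 2) - sepExp n f ^ 2 := by
  set μ := sepExp n f with hμ
  have hexpand : (fun σ => (f σ - μ) ^ 2) = fun σ => f σ ^ 2 + (-2 * μ * f σ + μ ^ 2) := by
    ext σ
    ring
  rw [sepVar, ← hμ, hexpand, sepExp_add, sepExp_add, sepExp_const_mul, sepExp_const, ← hμ]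
  ring

lemma sepExp_choose_peaks (i : ℕ) :
    sepExp n (fun σ => ((peaks σ).choose i : ℝ)) = binomMoment i n / binomMoment 0 n := by
  rw [sepExp, binomMoment_zero, binomMoment]

lemma sepVar_peaks : sepVar n (fun σ => (peaks σ : ℝ)) =
    2 * (binomMoment 2 n / binomMoment 0 n) + binomMoment 1 n / binomMoment 0 n -
      (binomMoment 1 n / binomMoment 0 n) ^ 2 := by
  have hsq : (fun σ : Perm (Fin n) => (peaks σ : ℝ) ^ 2) =
      fun σ => 2 * ((peaks σ).choose 2 : ℝ) + ((peaks σ).choose 1 : ℝ) := by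
    ext σ
    rw [Nat.cast_choose_two, Nat.choose_one_right]
    ring
  have hone : (fun σ : Perm (Fin n) => (peaks σ : ℝ)) = fun σ => ((peaks σ).choose 1 : ℝ) := by
    simp only [Nat.choose_one_right]
  rw [sepVar_eq_sub, hsq, sepExp_add, sepExp_const_mul, hone, sepExp_choose_peaks,
    sepExp_choose_peaks]

local notation "q" => sepRatio
local notation "ρ" => sepRadius

-- Subtracting `ρ` from `q (n + 2)` isolates the terms of order `n ^ 2`, which cancel in the limit.
lemma sepVar_peaks_add_four (n : ℕ) :
    sepVar (n + 4) (fun σ => (peaks σ : ℝ)) =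
      ((n + 2) * ((n + 2) * (q (n + 2) - ρ)) * (6 - ρ - q (n + 2)) / 4 +
        (n + 2) * (5 * q (n + 2) - 1) + (2 * q (n + 2) + q (n + 1) * q (n + 2) - 1)) / 4 := by
  have hcard := (binomMoment_zero_pos (n + 4)).ne'
  have hq₁ : binomMoment 0 (n + 2) = q (n + 1) * binomMoment 0 (n + 3) :=
    binomMoment_zero_eq_sepRatio_mul (n + 1)
  have hq₂ : binomMoment 0 (n + 3) = q (n + 2) * binomMoment 0 (n + 4) :=
    binomMoment_zero_eq_sepRatio_mul (n + 2)
  have hone : binomMoment 1 (n + 4) / binomMoment 0 (n + 4) = (n + 2) * (1 + q (n + 2)) / 4 := by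
    have h := binomMoment_one_eq (n + 2)
    push_cast at h
    rw [div_eq_iff hcard]
    linear_combination h / 4 + (n + 2) / 4 * hq₂
  have htwo : binomMoment 2 (n + 4) / binomMoment 0 (n + 4) =
      (-(2 * n + 5) + 2 * (n + 3) ^ 2 * q (n + 2) + q (n + 1) * q (n + 2)) / 8 := by
    rw [div_eq_iff hcard]
    linear_combination binomMoment_two_eq n / 8 + hq₁ / 8 + ((n + 3) ^ 2 / 4 + q (n + 1) / 8) * hq₂
  rw [sepVar_peaks, hone, htwo]
  linear_combination -(n + 2) ^ 2 / 16 * sepRadius_sq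

theorem tendsto_sepVar_peaks_div :
    Tendsto (fun n : ℕ => sepVar n (fun σ => (peaks σ : ℝ)) / n) atTop
      (nhds ((11 * ρ - 1) / 16)) := by
  rw [← tendsto_add_atTop_iff_nat 4]
  have hinv : Tendsto (fun n : ℕ => ((n : ℝ) + 4)⁻¹) atTop (nhds 0) :=
    (tendsto_natCast_atTop_atTop.atTop_add tendsto_const_nhds).inv_tendsto_atTop
  have hfrac : Tendsto (fun n : ℕ => 1 - 2 * ((n : ℝ) + 4)⁻¹) atTop (nhds 1) := by
    simpa using (hinv.const_mul 2).const_sub 1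
  have hq₁ : Tendsto (fun n => q (n + 1)) atTop (nhds ρ) :=
    (tendsto_add_atTop_iff_nat 1).mpr tendsto_sepRatio
  have hq₂ : Tendsto (fun n => q (n + 2)) atTop (nhds ρ) :=
    (tendsto_add_atTop_iff_nat 2).mpr tendsto_sepRatio
  have hδ := (tendsto_add_atTop_iff_nat 2).mpr tendsto_mul_sepRatio_sub
  have hmain := ((hδ.mul (hq₂.const_sub (6 - ρ))).div_const 4).add ((hq₂.const_mul 5).sub_const 1)
  have hrest := ((hq₂.const_mul 2).add (hq₁.mul hq₂)).sub_const 1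
  have hlim := ((hfrac.mul hmain).add (hinv.mul hrest)).div_const 4
  convert hlim.congr fun n => ?_ using 2
  · linear_combination 3 / 16 * sepRadius_sq
  · rw [sepVar_peaks_add_four]
    push_cast
    field_simp
    ring

theorem tendsto_sepVar_altTypeLen_true_false_div :
    Tendsto (fun n : ℕ => sepVar n (fun σ => (altTypeLen σ true false : ℝ)) / n) atTop
      (nhds ((16 - 11 * √2) / 2)) := by
  have hlim : 2 ^ 2 * ((11 * ρ - 1) / 16) = (16 - 11 * √2) / 2 := by
    rw [sepRadius]
    ring
  rw [← hlim]
  refine (tendsto_sepVar_peaks_div.const_mul (2 ^ 2)).congr' ?_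
  filter_upwards [eventually_gt_atTop 0] with n hn
  simp only [altTypeLen_true_false hn, Nat.cast_add, Nat.cast_mul, Nat.cast_ofNat, Nat.cast_one,
    sepVar_const_mul_add_const, mul_div_assoc]

end Variance

/-- The variances of `Aₙ^{+,-}` and `Aₙ^{-,+}` are asymptotic to `((16 - 11√2)/2) n`. -/
theorem var_altTypeLen_pm_asymp :
    Tendsto (fun n : ℕ =>
        sepVar n (fun σ => (altTypeLen σ true false : ℝ)) / n) atTop
      (nhds ((16 - 11 * Real.sqrt 2) / 2)) ∧
    Tendsto (fun n : ℕ =>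
        sepVar n (fun σ => (altTypeLen σ false true : ℝ)) / n) atTop
      (nhds ((16 - 11 * Real.sqrt 2) / 2)) := by
  refine ⟨tendsto_sepVar_altTypeLen_true_false_div,
    tendsto_sepVar_altTypeLen_true_false_div.congr fun n => ?_⟩
  simp only [altTypeLen_false_true]
  rw [sepVar_permCompl fun σ => (altTypeLen σ true false : ℝ)]
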